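/- Let U, V ⊆ ℝ be intervals and let σ(u,v) = (γ(u) + f(v)·ξ(u), z(v)) be a T-surface on U × V: γ, ξ : U → ℝ² differentiable with γ'(u) ≠ 0, ξ'(u) = λ(u)·γ'(u) for some λ : U → ℝ, ξ(u) and γ'(u) linearly independent, 1 + f(v)λ(u) ≠ 0 for all (u,v), and f, z : V → ℝ differentiable with (f'(v), z'(v)) ≠ (0,0). Let γ̃ : U → ℝ² be differentiable with γ̃'(u) = μ(u)·γ'(u) for some μ : U → ℝ, let f̃, z̃ : V → ℝ be differentiable with (f̃'(v), z̃'(v)) = ν(v)·(f'(v), z'(v)) for some ν : V → ℝ with ν(v) ≠ 0, and assume μ(u) + f̃(v)·λ(u) ≠ 0 for all (u,v). Define σ̃(u,v) = (γ̃(u) + f̃(v)·ξ(u), z̃(v)). Then for all (u,v): σ̃_u(u,v) = ( (μ(u)+f̃(v)λ(u)) / (1+f(v)λ(u)) )·σ_u(u,v), and σ̃_v(u,v) = ν(v)·σ_v(u,v). In particular σ̃ is a regular parametrized surface parallel to σ. -/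

import Mathlib

open Real Set

/-- The vector of `ℝ³` with ground-view component `w ∈ ℝ²` and height `r`. -/
noncomputable def emb (w : EuclideanSpace ℝ (Fin 2)) (r : ℝ) : EuclideanSpace ℝ (Fin 3) :=
  !₂[w 0, w 1, r]

/-!
In the horizontal-vertical splitting, `σ_u = ((1 + fλ)γ', 0)` and `σ_v = (f'ξ, z')`. Passing to `σ̃`
keeps the directions `γ'` and `ξ`: it only replaces the factor `1 + fλ` by `μ + f̃λ` and scales the
profile velocity `(f', z')` by `ν`. As `ξ` and `γ'` are independent, `σ̃` is regular as soon as
`μ + f̃λ` and `ν(f', z')` do not vanish.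
-/

section TSurface

variable {𝕜 E F G : Type*} [NontriviallyNormedField 𝕜]
  [NormedAddCommGroup E] [NormedSpace 𝕜 E] [NormedAddCommGroup F] [NormedSpace 𝕜 F]
  [NormedAddCommGroup G] [NormedSpace 𝕜 G]

/-- The T-surface `(γ(u) + f(v)ξ(u), z(v))` with trajectory curve `γ`, profile `(f, z)` and direction
field `ξ`. The linear map `L` places the horizontal space `E` and the vertical space
`G` in the ambient space `F`; classically `E = ℝ²`, `G = ℝ` and `F = ℝ³`. -/
def tSurface (L : E × G →L[𝕜] F) (γ ξ : 𝕜 → E) (f : 𝕜 → 𝕜) (z : 𝕜 → G) (u v : 𝕜) : F :=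
  L (γ u + f v • ξ u, z v)

theorem hasDerivWithinAt_tSurface_left (L : E × G →L[𝕜] F) {γ ξ : 𝕜 → E} (f : 𝕜 → 𝕜) (z : 𝕜 → G)
    {U : Set 𝕜} {u : 𝕜} {w : E} {m l : 𝕜} (hγ : HasDerivWithinAt γ (m • w) U u)
    (hξ : HasDerivWithinAt ξ (l • w) U u) (v : 𝕜) :
    HasDerivWithinAt (fun u' => tSurface L γ ξ f z u' v) (L ((m + f v * l) • w, 0)) U u := by
  rw [add_smul, ← smul_smul]
  exact L.hasFDerivAt.comp_hasDerivWithinAt u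
    ((hγ.add (hξ.const_smul (f v))).prodMk (hasDerivWithinAt_const u U (z v)))

theorem hasDerivWithinAt_tSurface_right (L : E × G →L[𝕜] F) (γ ξ : 𝕜 → E) {f : 𝕜 → 𝕜} {z : 𝕜 → G}
    {V : Set 𝕜} {v f' : 𝕜} {z' : G} (hf : HasDerivWithinAt f f' V v)
    (hz : HasDerivWithinAt z z' V v) (u : 𝕜) :
    HasDerivWithinAt (fun v' => tSurface L γ ξ f z u v') (L (f' • ξ u, z')) V v :=
  L.hasFDerivAt.comp_hasDerivWithinAt v (((hf.smul_const (ξ u)).const_add (γ u)).prodMk hz)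

end TSurface

section LinearIndependence

variable {𝕜 E G : Type*} [Field 𝕜] [AddCommGroup E] [Module 𝕜 E] [AddCommGroup G] [Module 𝕜 G]

theorem linearIndependent_pair_prod_smul {x w : E} (hxw : LinearIndependent 𝕜 ![x, w])
    {a b : 𝕜} {r : G} (ha : a ≠ 0) (hbr : (b, r) ≠ 0) :
    LinearIndependent 𝕜 ![(a • w, (0 : G)), (b • x, r)] := by
  refine LinearIndependent.pair_iff.2 fun s t hst => ?_
  obtain ⟨horizontal, vertical⟩ := Prod.ext_iff.1 hst
  have htr : t • r = 0 := by simpa using vertical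
  have hcoeff : (t * b) • x + (s * a) • w = 0 := by
    simpa [smul_smul, add_comm] using horizontal
  obtain ⟨htb, hsa⟩ := LinearIndependent.pair_iff.1 hxw _ _ hcoeff
  have htbr : t • (b, r) = 0 := Prod.ext htb htr
  exact ⟨(mul_eq_zero.1 hsa).resolve_right ha, (smul_eq_zero.1 htbr).resolve_right hbr⟩

end LinearIndependence

theorem stmt_18_general {𝕜 E F G : Type*} [NontriviallyNormedField 𝕜]
    [NormedAddCommGroup E] [NormedSpace 𝕜 E] [NormedAddCommGroup F] [NormedSpace 𝕜 F]
    [NormedAddCommGroup G] [NormedSpace 𝕜 G]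
    {L : E × G →L[𝕜] F} (hL : Function.Injective L) {U V : Set 𝕜}
    {γ ξ γ' : 𝕜 → E} {lam : 𝕜 → 𝕜} {f f' : 𝕜 → 𝕜} {z z' : 𝕜 → G}
    (hγ : ∀ u ∈ U, HasDerivWithinAt γ (γ' u) U u)
    (hξ : ∀ u ∈ U, HasDerivWithinAt ξ (lam u • γ' u) U u)
    (hind : ∀ u ∈ U, LinearIndependent 𝕜 ![ξ u, γ' u])
    (hreg : ∀ u ∈ U, ∀ v ∈ V, 1 + f v * lam u ≠ 0)
    (hf : ∀ v ∈ V, HasDerivWithinAt f (f' v) V v)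
    (hz : ∀ v ∈ V, HasDerivWithinAt z (z' v) V v)
    (hfz : ∀ v ∈ V, (f' v, z' v) ≠ 0)
    {γt : 𝕜 → E} {mu ft ν : 𝕜 → 𝕜} {zt : 𝕜 → G}
    (hγt : ∀ u ∈ U, HasDerivWithinAt γt (mu u • γ' u) U u)
    (hft : ∀ v ∈ V, HasDerivWithinAt ft (ν v * f' v) V v)
    (hzt : ∀ v ∈ V, HasDerivWithinAt zt (ν v • z' v) V v)
    (hν : ∀ v ∈ V, ν v ≠ 0)
    (hregt : ∀ u ∈ U, ∀ v ∈ V, mu u + ft v * lam u ≠ 0) :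
    ∀ u ∈ U, ∀ v ∈ V,
      HasDerivWithinAt (fun u' => tSurface L γ ξ f z u' v)
        (L ((1 + f v * lam u) • γ' u, 0)) U u ∧
      HasDerivWithinAt (fun v' => tSurface L γ ξ f z u v') (L (f' v • ξ u, z' v)) V v ∧
      HasDerivWithinAt (fun u' => tSurface L γt ξ ft zt u' v)
        (L ((mu u + ft v * lam u) • γ' u, 0)) U u ∧
      HasDerivWithinAt (fun v' => tSurface L γt ξ ft zt u v')
        (L ((ν v * f' v) • ξ u, ν v • z' v)) V v ∧
      L ((mu u + ft v * lam u) • γ' u, 0) =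
        ((mu u + ft v * lam u) / (1 + f v * lam u)) • L ((1 + f v * lam u) • γ' u, 0) ∧
      L ((ν v * f' v) • ξ u, ν v • z' v) = ν v • L (f' v • ξ u, z' v) ∧
      LinearIndependent 𝕜
        ![L ((mu u + ft v * lam u) • γ' u, 0), L ((ν v * f' v) • ξ u, ν v • z' v)] := by
  intro u hu v hv
  have hγ_one : HasDerivWithinAt γ ((1 : 𝕜) • γ' u) U u := by simpa only [one_smul] using hγ u hu
  refine ⟨hasDerivWithinAt_tSurface_left L f z hγ_one (hξ u hu) v,
    hasDerivWithinAt_tSurface_right L γ ξ (hf v hv) (hz v hv) u,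
    hasDerivWithinAt_tSurface_left L ft zt (hγt u hu) (hξ u hu) v,
    hasDerivWithinAt_tSurface_right L γt ξ (hft v hv) (hzt v hv) u, ?_, ?_, ?_⟩
  · rw [← map_smul, Prod.smul_mk, smul_zero, smul_smul, div_mul_cancel₀ _ (hreg u hu v hv)]
  · rw [← map_smul, Prod.smul_mk, smul_smul]
  · have profile_ne_zero : (ν v * f' v, ν v • z' v) ≠ 0 := smul_ne_zero (hν v hv) (hfz v hv)
    have hpair := (linearIndependent_pair_prod_smul (hind u hu) (hregt u hu v hv)
      profile_ne_zero).map' L.toLinearMap (LinearMap.ker_eq_bot.2 hL)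
    rwa [← FinVec.map_eq] at hpair

/-- `emb` as a continuous linear map, the splitting of `ℝ³` into ground view and height. -/
noncomputable def embCLM : EuclideanSpace ℝ (Fin 2) × ℝ →L[ℝ] EuclideanSpace ℝ (Fin 3) :=
  LinearMap.toContinuousLinearMap
    { toFun := fun p => emb p.1 p.2
      map_add' := fun p q => by ext i; fin_cases i <;> simp [emb]
      map_smul' := fun c p => by ext i; fin_cases i <;> simp [emb] }

theorem embCLM_apply (w : EuclideanSpace ℝ (Fin 2)) (r : ℝ) : embCLM (w, r) = emb w r := rfl

theorem embCLM_injective : Function.Injective embCLM := by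
  rintro ⟨w, r⟩ ⟨w', r'⟩ h
  have coord (i : Fin 3) : emb w r i = emb w' r' i := congrArg (fun x => x i) h
  have hw : w = w' := by
    ext i
    fin_cases i
    · exact coord 0
    · exact coord 1
  exact Prod.ext hw (coord 2)

/-- **Theorem 5.9.** Given a T-surface `σ(u,v) = (γ(u) + f(v)ξ(u), z(v))` and data
`γ̃' = μγ'`, `(f̃', z̃') = ν(f', z')` with `ν ≠ 0` and `μ + f̃λ ≠ 0`, the surface
`σ̃(u,v) = (γ̃(u) + f̃(v)ξ(u), z̃(v))` is a regular parametrized surface parallel to `σ`: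
`σ̃_u = ((μ + f̃λ)/(1 + fλ))·σ_u` and `σ̃_v = ν·σ_v`. -/
theorem stmt_18 (U V : Set ℝ) (hUc : U.OrdConnected) (hVc : V.OrdConnected)
    (γ ξ γ' : ℝ → EuclideanSpace ℝ (Fin 2)) (lam : ℝ → ℝ)
    (f z f' z' : ℝ → ℝ)
    (hγ : ∀ u ∈ U, HasDerivWithinAt γ (γ' u) U u)
    (hγ'ne : ∀ u ∈ U, γ' u ≠ 0)
    (hξ : ∀ u ∈ U, HasDerivWithinAt ξ (lam u • γ' u) U u)
    (hind : ∀ u ∈ U, LinearIndependent ℝ ![ξ u, γ' u])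
    (hreg : ∀ u ∈ U, ∀ v ∈ V, 1 + f v * lam u ≠ 0)
    (hf : ∀ v ∈ V, HasDerivWithinAt f (f' v) V v)
    (hz : ∀ v ∈ V, HasDerivWithinAt z (z' v) V v)
    (hfz : ∀ v ∈ V, ¬(f' v = 0 ∧ z' v = 0))
    -- the parallel data
    (γt : ℝ → EuclideanSpace ℝ (Fin 2)) (mu : ℝ → ℝ)
    (ft zt : ℝ → ℝ) (ν : ℝ → ℝ)
    (hγt : ∀ u ∈ U, HasDerivWithinAt γt (mu u • γ' u) U u)
    (hft : ∀ v ∈ V, HasDerivWithinAt ft (ν v * f' v) V v)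
    (hzt : ∀ v ∈ V, HasDerivWithinAt zt (ν v * z' v) V v)
    (hν : ∀ v ∈ V, ν v ≠ 0)
    (hregt : ∀ u ∈ U, ∀ v ∈ V, mu u + ft v * lam u ≠ 0)
    (σ σt : ℝ → ℝ → EuclideanSpace ℝ (Fin 3))
    (hσ : ∀ u v, σ u v = emb (γ u + f v • ξ u) (z v))
    (hσt : ∀ u v, σt u v = emb (γt u + ft v • ξ u) (zt v)) :
    ∀ u ∈ U, ∀ v ∈ V,
      HasDerivWithinAt (fun u' => σ u' v)
        (emb (γ' u + (f v * lam u) • γ' u) 0) U u ∧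
      HasDerivWithinAt (fun v' => σ u v') (emb (f' v • ξ u) (z' v)) V v ∧
      HasDerivWithinAt (fun u' => σt u' v)
        (emb (mu u • γ' u + (ft v * lam u) • γ' u) 0) U u ∧
      HasDerivWithinAt (fun v' => σt u v') (emb ((ν v * f' v) • ξ u) (ν v * z' v)) V v ∧
      -- σ̃_u is the stated scalar multiple of σ_u and σ̃_v = ν · σ_v
      emb (mu u • γ' u + (ft v * lam u) • γ' u) 0 =
        ((mu u + ft v * lam u) / (1 + f v * lam u)) • emb (γ' u + (f v * lam u) • γ' u) 0 ∧
      emb ((ν v * f' v) • ξ u) (ν v * z' v) = ν v • emb (f' v • ξ u) (z' v) ∧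
      -- σ̃ is regular
      LinearIndependent ℝ
        ![emb (mu u • γ' u + (ft v * lam u) • γ' u) 0,
          emb ((ν v * f' v) • ξ u) (ν v * z' v)] := by
  obtain rfl : σ = tSurface embCLM γ ξ f z := funext₂ hσ
  obtain rfl : σt = tSurface embCLM γt ξ ft zt := funext₂ hσt
  simpa only [add_smul, one_smul, smul_eq_mul, embCLM_apply] using
    stmt_18_general embCLM_injective hγ hξ hind hreg hf hz
      (fun v hv => mt Prod.mk_eq_zero.1 (hfz v hv)) hγt hft hzt hν hregt
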